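/- arXiv:2410.18905 — 3 statements merged into one kernel-verified Lean document; each statement's English description precedes it below -/
import Mathlib

section
/- If the stabilisation of an SSM configuration η on a locally finite graph G ends in the configuration η_∞ = 𝟙_A (exactly one particle on each site of A and none elsewhere), then the stabilisation odometer equals the A-stabilisation odometer: m_η = m_η^A. -/
/-!
Two observations give the equality. A half-unstable site is `A`-unstable for every `A`, so
half-legal sequences are `A`-legal and `m_η ≤ m_η^A`. Conversely, the sequence `α` leading to
`𝟙_A` ends in a state that is `A`-stable everywhere, so the least action principle
(`count_le_of_aStable`) bounds every `A`-legal sequence by `α`, which is itself half-legal;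
hence `m_η^A ≤ m_α ≤ m_η`.

The least action principle rests on the mass balance `hconf_fst_add_count`: the particle number at a
site after a legal sequence is the initial number, plus an inflow which is monotone in the
toppling counts, minus the number of half-topplings at that site.
-/

/-!  Diaconis–Fulton representation of the stochastic sandpile model: half-topplings.

An instruction field `τ : V → ℕ → V` gives, for each site `x` and index `j`, the target of the
`j`-th jump instruction at `x` (instructions are numbered from `0`).  A state is a pair
`(η, h)` where `η : V → ℕ` is the particle configuration and `h : V → ℕ` counts the number of
half-topplings already performed at each site (this is twice the odometer of the paper, which
is `(1/2)ℕ`-valued; `h x` even corresponds to an integer odometer value). -/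

variable {V : Type*} [DecidableEq V]

/-- A half-toppling at `x`: one particle jumps from `x` following the next unused
instruction at `x`, and the half-toppling counter at `x` increases by one. -/
def hstep (τ : V → ℕ → V) (c : (V → ℕ) × (V → ℕ)) (x : V) : (V → ℕ) × (V → ℕ) :=
  (fun z => (c.1 z - if z = x then 1 else 0) + (if τ x (c.2 x) = z then 1 else 0),
   fun z => c.2 z + if z = x then 1 else 0)

/-- The state obtained from `(η, 0)` after performing the half-topplings of the sequence `α`. -/
def hconf (τ : V → ℕ → V) (η : V → ℕ) (α : List V) : (V → ℕ) × (V → ℕ) :=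
  α.foldl (hstep τ) (η, fun _ => 0)

/-- A site `x` is half-unstable in `(η, h)` if `η x ≥ 2`, or `η x = 1` and the odometer at `x`
is not an integer (i.e. the half-toppling count is odd). -/
def HalfUnstable (c : (V → ℕ) × (V → ℕ)) (x : V) : Prop :=
  2 ≤ c.1 x ∨ (c.1 x = 1 ∧ ¬ Even (c.2 x))

/-- A sequence of half-topplings is half-legal for `η` if each half-toppling is performed at a
site which is half-unstable at that moment. -/
def HalfLegal (τ : V → ℕ → V) (η : V → ℕ) (α : List V) : Prop :=
  ∀ ℓ, (hℓ : ℓ < α.length) → HalfUnstable (hconf τ η (α.take ℓ)) (α.get ⟨ℓ, hℓ⟩)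

/-- Given a settling set `A`, a site is `A`-unstable for `(η, h)` when it is not `A`-stable:
for `x ∈ A` this means `η x ≥ 2`, or `η x = 1` with a non-integer odometer; for `x ∉ A` it
means `η x ≥ 1`. -/
def AUnstable (A : Set V) (c : (V → ℕ) × (V → ℕ)) (x : V) : Prop :=
  (x ∈ A ∧ (2 ≤ c.1 x ∨ (c.1 x = 1 ∧ ¬ Even (c.2 x)))) ∨ (x ∉ A ∧ 1 ≤ c.1 x)

/-- A sequence of half-topplings is `A`-legal for `η` if each half-toppling is performed at a
site which is `A`-unstable at that moment. -/
def ALegal (τ : V → ℕ → V) (η : V → ℕ) (A : Set V) (α : List V) : Prop :=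
  ∀ ℓ, (hℓ : ℓ < α.length) → AUnstable A (hconf τ η (α.take ℓ)) (α.get ⟨ℓ, hℓ⟩)

/-- The stabilisation odometer `m_η`: the supremum, over all half-legal sequences, of the
number of half-topplings performed at `x`. -/
noncomputable def odometerHalf (τ : V → ℕ → V) (η : V → ℕ) (x : V) : ℕ∞ :=
  ⨆ α : {α : List V // HalfLegal τ η α}, ((α : List V).count x : ℕ∞)

/-- The `A`-stabilisation odometer `m_η^A`: the supremum, over all `A`-legal sequences, of the
number of half-topplings performed at `x`. -/
noncomputable def odometerA (τ : V → ℕ → V) (η : V → ℕ) (A : Set V) (x : V) : ℕ∞ :=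
  ⨆ α : {α : List V // ALegal τ η A α}, ((α : List V).count x : ℕ∞)

/-- The number of particles sent to `z` by the sites of `S` when each `y ∈ S` has used its first
`m y` instructions. -/
def inflow {V : Type*} [DecidableEq V] (τ : V → ℕ → V) (S : Finset V) (m : V → ℕ) (z : V) : ℕ :=
  ∑ y ∈ S, ((Finset.range (m y)).filter (fun j => τ y j = z)).card

theorem inflow_mono {V : Type*} [DecidableEq V] (τ : V → ℕ → V) (S : Finset V) {m n : V → ℕ}
    (h : ∀ y, m y ≤ n y) (z : V) : inflow τ S m z ≤ inflow τ S n z :=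
  Finset.sum_le_sum fun y _ => Finset.card_le_card <|
    Finset.filter_subset_filter _ (Finset.range_subset_range.2 (h y))

theorem inflow_add_single {V : Type*} [DecidableEq V] (τ : V → ℕ → V) (S : Finset V) (m : V → ℕ)
    {x : V} (hx : x ∈ S) (z : V) :
    inflow τ S (fun y => m y + if y = x then 1 else 0) z
      = inflow τ S m z + if τ x (m x) = z then 1 else 0 := by
  unfold inflow
  rw [← Finset.add_sum_erase S _ hx, ← Finset.add_sum_erase S _ hx]
  have hrest : ∑ y ∈ S.erase x, ((Finset.range (m y + if y = x then 1 else 0)).filter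
      (fun j => τ y j = z)).card
      = ∑ y ∈ S.erase x, ((Finset.range (m y)).filter (fun j => τ y j = z)).card :=
    Finset.sum_congr rfl fun y hy => by simp [Finset.ne_of_mem_erase hy]
  simp only [if_true]
  rw [hrest, Finset.range_add_one, Finset.filter_insert]
  split_ifs
  · rw [Finset.card_insert_of_notMem (by simp)]
    omega
  · omega

theorem hconf_concat {V : Type*} [DecidableEq V] (τ : V → ℕ → V) (η : V → ℕ) (α : List V) (x : V) :
    hconf τ η (α ++ [x]) = hstep τ (hconf τ η α) x := by
  simp [hconf]

theorem count_concat {V : Type*} [DecidableEq V] (α : List V) (x y : V) :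
    (α ++ [x]).count y = α.count y + if y = x then 1 else 0 := by
  simp [List.count_append, List.count_singleton', eq_comm]

theorem hconf_snd {V : Type*} [DecidableEq V] (τ : V → ℕ → V) (η : V → ℕ) (α : List V) (y : V) :
    (hconf τ η α).2 y = α.count y := by
  induction α using List.reverseRecOn with
  | nil => simp [hconf]
  | append_singleton α x ih => rw [hconf_concat, count_concat, ← ih]; rfl

theorem aLegal_concat {V : Type*} [DecidableEq V] {τ : V → ℕ → V} {η : V → ℕ} {A : Set V}
    {α : List V} {x : V} (h : ALegal τ η A (α ++ [x])) :
    ALegal τ η A α ∧ AUnstable A (hconf τ η α) x := by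
  constructor
  · intro l hl
    have := h l (by simp; omega)
    simpa [List.take_append_of_le_length hl.le, List.getElem_append_left hl] using this
  · simpa using h α.length (by simp)

theorem AUnstable.pos {V : Type*} {A : Set V} {c : (V → ℕ) × (V → ℕ)} {x : V}
    (h : AUnstable A c x) : 1 ≤ c.1 x := by
  unfold AUnstable at h
  omega

/-- Mass balance along an `A`-legal sequence. Legality ensures that a toppled site is occupied,
so that the subtraction in `hstep` never truncates. -/
theorem hconf_fst_add_count {V : Type*} [DecidableEq V] {τ : V → ℕ → V} {η : V → ℕ} {A : Set V}
    {S : Finset V} {α : List V} (hα : ALegal τ η A α) (hS : ∀ y ∈ α, y ∈ S) (z : V) :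
    (hconf τ η α).1 z + α.count z = η z + inflow τ S (fun y => α.count y) z := by
  induction α using List.reverseRecOn with
  | nil => simp [hconf, inflow]
  | append_singleton α x ih =>
    obtain ⟨hleg, hun⟩ := aLegal_concat hα
    have ih := ih hleg fun y hy => hS y (by simp [hy])
    have hpos := hun.pos
    simp only [count_concat]
    rw [inflow_add_single τ S _ (hS x (by simp)) z, hconf_concat]
    simp only [hstep, hconf_snd]
    by_cases hz : z = x
    · subst hz
      simp only [if_true]
      omega
    · simp only [if_neg hz]
      omega

/-- Least action principle: an `A`-legal sequence topples no site more often than an `A`-legal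
sequence that ends in an everywhere `A`-stable state. -/
theorem count_le_of_aStable {V : Type*} [DecidableEq V] {τ : V → ℕ → V} {η : V → ℕ} {A : Set V}
    {α β : List V} (hα : ALegal τ η A α) (hst : ∀ x, ¬ AUnstable A (hconf τ η α) x)
    (hβ : ALegal τ η A β) (x : V) : β.count x ≤ α.count x := by
  induction β using List.reverseRecOn generalizing x with
  | nil => simp
  | append_singleton β y ih =>
    obtain ⟨hleg, hun⟩ := aLegal_concat hβ
    have ih := ih hleg
    rw [count_concat]
    split_ifs with hxy
    swap
    · exact ih x
    subst hxy
    by_contra hlt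
    have heq : β.count x = α.count x := by have := ih x; omega
    -- The counts agree at `x` and `α` brings at least as many particles there, so `x` would
    -- still be `A`-unstable after `α`.
    have h1 := hconf_fst_add_count (S := (α ++ β).toFinset) hα
      (fun y hy => by simp [hy]) x
    have h2 := hconf_fst_add_count (S := (α ++ β).toFinset) hleg
      (fun y hy => by simp [hy]) x
    have h3 := inflow_mono τ (α ++ β).toFinset ih x
    apply hst x
    unfold AUnstable at hun ⊢
    rw [hconf_snd] at hun ⊢
    rw [heq] at hun
    have hle : (hconf τ η β).1 x ≤ (hconf τ η α).1 x := by omega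
    rcases hun with ⟨hA, h | ⟨h, hodd⟩⟩ | ⟨hA, h⟩
    · exact .inl ⟨hA, .inl (by omega)⟩
    · rcases Nat.lt_or_ge 1 ((hconf τ η α).1 x) with h' | h'
      · exact .inl ⟨hA, .inl h'⟩
      · exact .inl ⟨hA, .inr ⟨by omega, hodd⟩⟩
    · exact .inr ⟨hA, by omega⟩

theorem HalfLegal.aLegal {V : Type*} [DecidableEq V] {τ : V → ℕ → V} {η : V → ℕ} (A : Set V)
    {α : List V} (h : HalfLegal τ η α) : ALegal τ η A α := by
  intro l hl
  have h' := h l hl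
  unfold HalfUnstable at h'
  unfold AUnstable
  by_cases hA : α.get ⟨l, hl⟩ ∈ A
  · exact .inl ⟨hA, h'⟩
  · exact .inr ⟨hA, by omega⟩

/-- **Lemma (A-stabilisation).**  On a locally finite graph `G` with instruction field `τ`
pointing to neighbours, if the stabilisation of the SSM configuration `η` ends in the
configuration `η_∞ = 𝟙_A` (one particle on each site of `A`, none elsewhere) — i.e. some
half-legal sequence leads to a state which is half-stable everywhere with particle
configuration `𝟙_A` — then the stabilisation odometer coincides with the `A`-stabilisation
odometer: `m_η = m_η^A`. -/
theorem stmt4 {V : Type*} [DecidableEq V] (G : SimpleGraph V)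
    (hloc : ∀ x : V, (G.neighborSet x).Finite)
    (τ : V → ℕ → V) (hτ : ∀ x j, G.Adj x (τ x j))
    (η : V → ℕ) (A : Set V)
    (hstab : ∃ α : List V, HalfLegal τ η α ∧
      (∀ x, ¬ HalfUnstable (hconf τ η α) x) ∧
      (hconf τ η α).1 = A.indicator 1) :
    ∀ x, odometerHalf τ η x = odometerA τ η A x := by
  obtain ⟨α, hα, hst, hfin⟩ := hstab
  have hstA : ∀ x, ¬ AUnstable A (hconf τ η α) x := by
    rintro x (⟨-, h⟩ | ⟨hA, h⟩)
    · exact hst x h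
    · simp [hfin, hA] at h
  intro x
  apply le_antisymm
  · exact iSup_le fun β => le_iSup_of_le ⟨β.1, β.2.aLegal A⟩ le_rfl
  · refine iSup_le fun β => le_iSup_of_le ⟨α, hα⟩ ?_
    exact Nat.cast_le.2 (count_le_of_aStable (hα.aLegal A) hstA β.2 x)
end

section
/- Let V′ ⊂ V, x ∈ V′, and let α = (x_1,…,x_k) be a sequence of topplings which weakly stabilises an SSM configuration η in (x,V′). If there exists ℓ ∈ {0,1,…,k} such that the configuration obtained after the first ℓ topplings has at least one particle at some site of I_x, then the final configuration η_α has at least one particle at some site of I_x. -/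
/-!
Occupancy of `I_x` is preserved by every single `x`-weakly legal toppling, so it propagates from
time `ℓ` to the end of the sequence. Indeed, let `w` be the toppled site. If some occupied
`z ∈ I_x` differs from `w`, then `z` loses nothing. Otherwise `w ∈ I_x` is the only occupied site
of `I_x`; weak legality then forbids `w` to host exactly two particles, so it hosts at least three
and keeps one.
-/

/-!  Diaconis–Fulton representation of the SSM: full topplings and weak stabilisation. -/

variable {V : Type*} [DecidableEq V]

/-- A (full) toppling at `x`: two particles jump from `x` following the next two unused
instructions at `x`, and the toppling counter at `x` increases by one. -/
def fstep (τ : V → ℕ → V) (c : (V → ℕ) × (V → ℕ)) (x : V) : (V → ℕ) × (V → ℕ) :=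
  (fun z => (c.1 z - if z = x then 2 else 0) + (if τ x (2 * c.2 x) = z then 1 else 0)
      + (if τ x (2 * c.2 x + 1) = z then 1 else 0),
   fun z => c.2 z + if z = x then 1 else 0)

/-- The state obtained from `(η, 0)` after performing the topplings of the sequence `α`. -/
def fconf (τ : V → ℕ → V) (η : V → ℕ) (α : List V) : (V → ℕ) × (V → ℕ) :=
  α.foldl (fstep τ) (η, fun _ => 0)

/-- A toppling sequence is legal for `η` when each toppled site is unstable
(hosts at least two particles) at the moment it is toppled. -/
def FLegal (τ : V → ℕ → V) (η : V → ℕ) (α : List V) : Prop :=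
  ∀ ℓ, (hℓ : ℓ < α.length) → 2 ≤ (fconf τ η (α.take ℓ)).1 (α.get ⟨ℓ, hℓ⟩)

/-- `I_x = B(x,1)`, the set of vertices at graph distance at most one from `x`. -/
def ballOne (G : SimpleGraph V) (x : V) : Set V := {y | y = x ∨ G.Adj x y}

/-- `η` is stable in `V'` when every site of `V'` hosts at most one particle. -/
def StableIn (η : V → ℕ) (V' : Set V) : Prop := ∀ y ∈ V', η y ≤ 1

/-- `η` is weakly stable in `(x, V')`: either `η` is stable in `V'`, or `η` is stable in
`V' ∖ I_x`, some site `z ∈ I_x` hosts exactly two particles and all the other sites of `I_x`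
are empty. -/
def WeaklyStable (G : SimpleGraph V) (η : V → ℕ) (x : V) (V' : Set V) : Prop :=
  StableIn η V' ∨
    (StableIn η (V' \ ballOne G x) ∧
      ∃ z ∈ ballOne G x, η z = 2 ∧ ∀ y ∈ ballOne G x, y ≠ z → η y = 0)

/-- A toppling sequence is `x`-weakly legal for `η` if it is legal and, whenever a site of
`I_x` hosting exactly two particles is toppled, some other site of `I_x` hosts at least one
particle at that moment. -/
def XWeaklyLegal (G : SimpleGraph V) (τ : V → ℕ → V) (η : V → ℕ) (x : V) (α : List V) :
    Prop :=
  FLegal τ η α ∧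
    ∀ ℓ, (hℓ : ℓ < α.length) → α.get ⟨ℓ, hℓ⟩ ∈ ballOne G x →
      (fconf τ η (α.take ℓ)).1 (α.get ⟨ℓ, hℓ⟩) = 2 →
      ∃ z ∈ ballOne G x, z ≠ α.get ⟨ℓ, hℓ⟩ ∧ 1 ≤ (fconf τ η (α.take ℓ)).1 z

/-- `α` weakly stabilises `η` in `(x, V')`: it is contained in `V'`, it is `x`-weakly legal
for `η`, and the resulting configuration is weakly stable in `(x, V')`. -/
def WeaklyStabilises (G : SimpleGraph V) (τ : V → ℕ → V) (η : V → ℕ) (x : V) (V' : Set V)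
    (α : List V) : Prop :=
  (∀ y ∈ α, y ∈ V') ∧ XWeaklyLegal G τ η x α ∧ WeaklyStable G (fconf τ η α).1 x V'

/-- A site different from the toppled one does not lose particles. -/
theorem le_fstep_of_ne {V : Type*} [DecidableEq V] (τ : V → ℕ → V)
    (c : (V → ℕ) × (V → ℕ)) {w z : V} (h : z ≠ w) : c.1 z ≤ (fstep τ c w).1 z := by
  simp only [fstep, if_neg h]
  omega

theorem sub_two_le_fstep {V : Type*} [DecidableEq V] (τ : V → ℕ → V)
    (c : (V → ℕ) × (V → ℕ)) (w : V) : c.1 w - 2 ≤ (fstep τ c w).1 w := by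
  simp only [fstep, if_true]
  omega

theorem fconf_take_succ {V : Type*} [DecidableEq V] (τ : V → ℕ → V) (η : V → ℕ)
    (α : List V) (m : ℕ) (hm : m < α.length) :
    fconf τ η (α.take (m + 1)) = fstep τ (fconf τ η (α.take m)) (α.get ⟨m, hm⟩) := by
  rw [List.take_add_one, List.getElem?_eq_getElem hm]
  simp only [fconf, Option.toList_some, List.foldl_append, List.foldl_cons, List.foldl_nil,
    List.get_eq_getElem]

/-- One `x`-weakly legal toppling does not empty `I_x`. -/
theorem occupied_succ {V : Type*} [DecidableEq V] (G : SimpleGraph V) (τ : V → ℕ → V)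
    (η : V → ℕ) (x : V) (α : List V) (hα : XWeaklyLegal G τ η x α) (m : ℕ)
    (hm : m < α.length) (h : ∃ z ∈ ballOne G x, 1 ≤ (fconf τ η (α.take m)).1 z) :
    ∃ z ∈ ballOne G x, 1 ≤ (fconf τ η (α.take (m + 1))).1 z := by
  obtain ⟨z, hz, hz1⟩ := h
  rw [fconf_take_succ τ η α m hm]
  by_cases hzw : z = α.get ⟨m, hm⟩
  · have hlegal := hα.1 m hm
    by_cases h2 : (fconf τ η (α.take m)).1 (α.get ⟨m, hm⟩) = 2
    · obtain ⟨y, hy, hyw, hy1⟩ := hα.2 m hm (hzw ▸ hz) h2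
      exact ⟨y, hy, hy1.trans (le_fstep_of_ne τ _ hyw)⟩
    · refine ⟨α.get ⟨m, hm⟩, hzw ▸ hz, le_trans ?_ (sub_two_le_fstep τ _ _)⟩
      omega
  · exact ⟨z, hz, hz1.trans (le_fstep_of_ne τ _ hzw)⟩

/-- **Lemma (weak stabilisation keeps a particle near `x`).**
Let `V' ⊆ V`, `x ∈ V'` and let `α = (x_1, …, x_k)` weakly stabilise `η` in `(x, V')`.
If after the first `ℓ` topplings (for some `ℓ ∈ {0, 1, …, k}`) some site of `I_x` hosts at
least one particle, then the final configuration `η_α` has at least one particle at some site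
of `I_x`. -/
theorem stmt5 {V : Type*} [DecidableEq V] (G : SimpleGraph V)
    (τ : V → ℕ → V) (hτ : ∀ x j, G.Adj x (τ x j))
    (η : V → ℕ) (V' : Set V) (x : V) (hx : x ∈ V')
    (α : List V) (hα : WeaklyStabilises G τ η x V' α)
    (hvisit : ∃ ℓ ≤ α.length, ∃ z ∈ ballOne G x, 1 ≤ (fconf τ η (α.take ℓ)).1 z) :
    ∃ z ∈ ballOne G x, 1 ≤ (fconf τ η α).1 z := by
  obtain ⟨ℓ, hℓ, hocc⟩ := hvisit
  have key : ∀ m, ℓ ≤ m → m ≤ α.length →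
      ∃ z ∈ ballOne G x, 1 ≤ (fconf τ η (α.take m)).1 z := by
    intro m hm
    induction m, hm using Nat.le_induction with
    | base => exact fun _ => hocc
    | succ m _ ih =>
      intro hlt
      exact occupied_succ G τ η x α hα.2.1 m hlt (ih (by omega))
  simpa using key α.length hℓ le_rfl
end

section
/- Let d = 2, μ ∈ (0,1) and v ∈ ℕ. Set r = 2⌊√(2v/μ)⌋ and D_j = 6^j · 12vr for every j ∈ ℕ₀. Then for every n ≥ r+1 and every A ⊂ ℤ_n^2 with |A| ≥ μ n^2, there exists L ∈ ℕ₀ and a (v,D)-dormitory hierarchy (A_j, 𝒞_j)_{j≤L} on A, with |A_L| ≥ |A|/4 and in which every set C ∈ 𝒞_0 is r-connected. -/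
/-!
Write `s = ⌊√(2v/μ)⌋`, so `r = 2s` and `(s+1)² > 2v/μ`.  The hierarchy built here is dyadic: every
cluster of level `j` has exactly `2^j v` points and diameter at most `6^j · 2vr = D_j / 6`.

*Packing* (`packing`). If no translate of a square of side `2ρ+1 ≤ n` contains more than `k` points
of `S`, then `|S| (2ρ+1)² ≤ k n²`, by double counting.

*Level zero* (`exists_blocks`). Remove from `A` disjoint `v`-point subsets of diameter at most `r`
as long as possible. By packing, the remainder has at most `v n² / (2s+1)² ≤ (2/9) μ n²` points.
A set of diameter at most `r` is trivially `r`-connected.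

*Going up* (`exists_matching`, `exists_ladder`). Match greedily those pairs of clusters whose union
has diameter at most `D_j`, and discard the `N` unmatched clusters. Representatives of two unmatched
clusters are at distance more than `D_j - 2 D_j / 6 = 2 D_j / 3`. So either `N ≤ 1`, or packing
bounds the loss `N 2^j v` by a geometrically decaying multiple of `μ n²`, whose sum is at most
`μ n² / 64`. Discarding at most one cluster per level costs at most half of the points: this is
encoded by carrying the extra term `2^j v` in the induction, which leads to
`2 |A_L| ≥ |A_0| - μ n² / 64`. Together with `|A_0| ≥ (7/9) |A|` this gives `|A_L| ≥ |A| / 4`.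
-/

/-- The discrete torus `ℤ_n^d`. -/
abbrev Torus (d n : ℕ) := Fin d → ZMod n

/-- The distance on the torus `ℤ_n^d` coming from the `ℓ^∞` norm on `ℤ^d`:
`d(x,y) = inf {‖a - b‖_∞ : a, b ∈ ℤ^d, π_n(a) = x, π_n(b) = y}`. -/
noncomputable def torusDist (d n : ℕ) (x y : Torus d n) : ℕ :=
  sInf {m : ℕ | ∃ a b : Fin d → ℤ,
    (∀ i, (a i : ZMod n) = x i) ∧ (∀ i, (b i : ZMod n) = y i) ∧ ∀ i, (a i - b i).natAbs ≤ m}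

/-- A set `C` is `r`-connected if any two of its points are joined by a chain of points of `C`
with consecutive distances at most `r`. -/
def RConnected (d n : ℕ) (r : ℕ) (C : Finset (Torus d n)) : Prop :=
  ∀ x ∈ C, ∀ y ∈ C, ∃ (k : ℕ) (c : ℕ → Torus d n), c 0 = x ∧ c k = y ∧
    (∀ i ≤ k, c i ∈ C) ∧ ∀ i < k, torusDist d n (c i) (c (i + 1)) ≤ r

/-- A `(v, D)`-dormitory hierarchy on `A ⊆ ℤ_n^d`: a non-increasing sequence of subsets
`A ⊇ A_0 ⊇ … ⊇ A_L` together with partitions `𝒞_j` of `A_j` such that every cluster at level `j`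
has cardinality at least `2^{⌊j/2⌋} v`, every cluster of `𝒞_{j+1} ∖ 𝒞_j` has diameter at most
`D_j` and is the union of two clusters of `𝒞_j`, and the last partition `𝒞_L` is a single set. -/
structure DormitoryHierarchy (d n v : ℕ) (D : ℕ → ℕ) (A : Finset (Torus d n)) (L : ℕ)
    (As : ℕ → Finset (Torus d n)) (Cs : ℕ → Finset (Finset (Torus d n))) : Prop where
  subset_A : As 0 ⊆ A
  antitone : ∀ j, j < L → As (j + 1) ⊆ As j
  nonempty : ∀ j ≤ L, ∀ C ∈ Cs j, C.Nonempty
  disjoint : ∀ j ≤ L, ∀ C ∈ Cs j, ∀ C' ∈ Cs j, C ≠ C' → Disjoint C C'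
  cover : ∀ j ≤ L, ∀ x, x ∈ As j ↔ ∃ C ∈ Cs j, x ∈ C
  volume : ∀ j ≤ L, ∀ C ∈ Cs j, 2 ^ (j / 2) * v ≤ C.card
  merge : ∀ j, j < L → ∀ C ∈ Cs (j + 1), C ∉ Cs j →
    (∀ x ∈ C, ∀ y ∈ C, torusDist d n x y ≤ D j) ∧
    ∃ C₀ ∈ Cs j, ∃ C₁ ∈ Cs j, C₀ ≠ C₁ ∧ C = C₀ ∪ C₁
  top : (Cs L).card = 1

/-! ### The torus distance -/

lemma torusDist_le {d n : ℕ} {x y : Torus d n} {m : ℕ} (a b : Fin d → ℤ)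
    (ha : ∀ i, (a i : ZMod n) = x i) (hb : ∀ i, (b i : ZMod n) = y i)
    (h : ∀ i, (a i - b i).natAbs ≤ m) : torusDist d n x y ≤ m :=
  Nat.sInf_le ⟨a, b, ha, hb, h⟩

lemma torusDist_spec {d n : ℕ} (x y : Torus d n) :
    ∃ a b : Fin d → ℤ, (∀ i, (a i : ZMod n) = x i) ∧ (∀ i, (b i : ZMod n) = y i) ∧
      ∀ i, (a i - b i).natAbs ≤ torusDist d n x y := by
  have hne : {m : ℕ | ∃ a b : Fin d → ℤ, (∀ i, (a i : ZMod n) = x i) ∧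
      (∀ i, (b i : ZMod n) = y i) ∧ ∀ i, (a i - b i).natAbs ≤ m}.Nonempty := by
    choose a ha using fun i => ZMod.intCast_surjective (x i)
    choose b hb using fun i => ZMod.intCast_surjective (y i)
    exact ⟨∑ i, (a i - b i).natAbs, a, b, ha, hb, fun i =>
      Finset.single_le_sum (f := fun i => (a i - b i).natAbs) (fun _ _ => Nat.zero_le _)
        (Finset.mem_univ i)⟩
  exact Nat.sInf_mem hne

lemma torusDist_comm {d n : ℕ} (x y : Torus d n) : torusDist d n x y = torusDist d n y x := by
  have key : ∀ x y : Torus d n, torusDist d n x y ≤ torusDist d n y x := by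
    intro x y
    obtain ⟨a, b, ha, hb, h⟩ := torusDist_spec y x
    refine torusDist_le b a hb ha fun i => ?_
    have := h i
    omega
  exact le_antisymm (key x y) (key y x)

lemma torusDist_triangle {d n : ℕ} (x y z : Torus d n) :
    torusDist d n x z ≤ torusDist d n x y + torusDist d n y z := by
  obtain ⟨a, b, ha, hb, h⟩ := torusDist_spec x y
  obtain ⟨b', c, hb', hc, h'⟩ := torusDist_spec y z
  refine torusDist_le a (fun i => c i + (b i - b' i)) ha (fun i => ?_) fun i => ?_
  · simp [hb, hb', hc]
  · have := h i
    have := h' i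
    omega

lemma torusDist_le_n {d n : ℕ} [NeZero n] (x y : Torus d n) : torusDist d n x y ≤ n := by
  refine torusDist_le (fun i => ((x i).val : ℤ)) (fun i => ((y i).val : ℤ)) (by simp) (by simp)
    fun i => ?_
  have := ZMod.val_lt (x i)
  have := ZMod.val_lt (y i)
  omega

/-- `C` has diameter at most `m` for the torus distance. -/
def DiamLE {d n : ℕ} (m : ℕ) (C : Finset (Torus d n)) : Prop :=
  ∀ x ∈ C, ∀ y ∈ C, torusDist d n x y ≤ m

lemma DiamLE.rConnected {d n r : ℕ} {C : Finset (Torus d n)} (h : DiamLE r C) :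
    RConnected d n r C := by
  intro x hx y hy
  refine ⟨1, fun i => if i = 0 then x else y, by simp, by simp, fun i _ => ?_, fun i hi => ?_⟩
  · dsimp only
    split_ifs <;> assumption
  · obtain rfl : i = 0 := by omega
    simpa using h x hx y hy

lemma DiamLE.union {d n e D : ℕ} {C C' : Finset (Torus d n)} (h : DiamLE e C) (h' : DiamLE e C')
    {x y : Torus d n} (hx : x ∈ C) (hy : y ∈ C') (hxy : torusDist d n x y + 2 * e ≤ D) :
    DiamLE D (C ∪ C') := by
  have cross : ∀ u ∈ C, ∀ w ∈ C', torusDist d n u w ≤ D := by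
    intro u hu w hw
    have h1 := h u hu x hx
    have h2 := h' y hy w hw
    have h3 := torusDist_triangle u x w
    have h4 := torusDist_triangle x y w
    omega
  intro u hu w hw
  rcases Finset.mem_union.1 hu with hu | hu <;> rcases Finset.mem_union.1 hw with hw | hw
  · have := h u hu w hw
    omega
  · exact cross u hu w hw
  · rw [torusDist_comm]
    exact cross w hw u hu
  · have := h' u hu w hw
    omega

/-! ### Packing -/

/-- Double counting of the pairs `(c, x)` with `x ∈ S` and `x - c` in a square of side `2ρ+1`:
if subsets of `S` of diameter at most `2ρ` have at most `k` points, then `|S| (2ρ+1)² ≤ k n²`. -/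
lemma packing {n ρ k : ℕ} [NeZero n] (hρ : 2 * ρ + 1 ≤ n) (S : Finset (Torus 2 n))
    (hS : ∀ T ⊆ S, DiamLE (2 * ρ) T → T.card ≤ k) :
    S.card * (2 * ρ + 1) ^ 2 ≤ k * n ^ 2 := by
  classical
  let I : Finset (ZMod n) := (Finset.range (2 * ρ + 1)).image (fun a : ℕ => (a : ZMod n))
  have hI : I.card = 2 * ρ + 1 := by
    rw [Finset.card_image_of_injOn, Finset.card_range]
    intro a ha b hb hab
    simp only [Finset.coe_range, Set.mem_Iio] at ha hb
    have := congrArg ZMod.val hab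
    simpa [ZMod.val_natCast, Nat.mod_eq_of_lt (show a < n by omega),
      Nat.mod_eq_of_lt (show b < n by omega)] using this
  let O : Finset (Torus 2 n) := Fintype.piFinset fun _ => I
  have hO : O.card = (2 * ρ + 1) ^ 2 := by
    simp [O, Fintype.card_piFinset, hI]
  have hcount := Finset.sum_card_bipartiteAbove_eq_sum_card_bipartiteBelow
    (s := S) (t := (Finset.univ : Finset (Torus 2 n))) (fun x c => x - c ∈ O)
  have h1 : ∀ x ∈ S, (Finset.bipartiteAbove (fun x c => x - c ∈ O) Finset.univ x).card
      = (2 * ρ + 1) ^ 2 := by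
    intro x _
    rw [← hO]
    refine Finset.card_bij (fun c _ => x - c) ?_ ?_ ?_
    · intro c hc
      simpa [Finset.bipartiteAbove] using hc
    · intro c _ c' _ h
      simpa using h
    · intro o ho
      exact ⟨x - o, by simpa [Finset.bipartiteAbove] using ho, by simp⟩
  have h2 : ∀ c ∈ (Finset.univ : Finset (Torus 2 n)),
      (Finset.bipartiteBelow (fun x c => x - c ∈ O) S c).card ≤ k := by
    intro c _
    refine hS _ (Finset.filter_subset _ _) ?_
    intro x hx y hy
    have hx' := (Finset.mem_filter.1 hx).2
    have hy' := (Finset.mem_filter.1 hy).2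
    simp only [O, I, Fintype.mem_piFinset, Finset.mem_image, Finset.mem_range] at hx' hy'
    choose a ha hax using hx'
    choose b hb hby using hy'
    choose z hz using fun i => ZMod.intCast_surjective (c i)
    refine torusDist_le (fun i => a i + z i) (fun i => b i + z i) (fun i => ?_) (fun i => ?_)
      fun i => ?_
    · simp [hax, hz]
    · simp [hby, hz]
    · have := ha i
      have := hb i
      omega
  rw [Finset.sum_congr rfl h1, Finset.sum_const, smul_eq_mul] at hcount
  calc S.card * (2 * ρ + 1) ^ 2 = _ := hcount
    _ ≤ ∑ c ∈ (Finset.univ : Finset (Torus 2 n)), k := Finset.sum_le_sum h2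
    _ = k * n ^ 2 := by
      simp [ZMod.card, mul_comm]

/-! ### Level zero and matchings -/

/-- Greedy extraction of disjoint `v`-point subsets satisfying `P`, leaving a remainder `R` without
any such subset. -/
lemma exists_blocks {α : Type*} [DecidableEq α] {v : ℕ} (hv : 1 ≤ v) (P : Finset α → Prop)
    (A : Finset α) :
    ∃ (𝒞 : Finset (Finset α)) (R : Finset α),
      (∀ C ∈ 𝒞, C ⊆ A ∧ C.card = v ∧ P C) ∧
      (∀ C ∈ 𝒞, ∀ C' ∈ 𝒞, C ≠ C' → Disjoint C C') ∧
      (∀ T ⊆ R, P T → T.card ≠ v) ∧ 𝒞.card * v + R.card = A.card := by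
  induction A using Finset.strongInduction with
  | H A ih =>
    by_cases h : ∃ T ⊆ A, P T ∧ T.card = v
    · obtain ⟨T, hTA, hPT, hTv⟩ := h
      have hTne : T.Nonempty := Finset.card_pos.1 (by omega)
      obtain ⟨𝒞, R, h1, h2, h3, h4⟩ := ih (A \ T) (Finset.sdiff_ssubset hTA hTne)
      have hdisj : ∀ C ∈ 𝒞, Disjoint C T := fun C hC =>
        Finset.disjoint_of_subset_left (h1 C hC).1 Finset.sdiff_disjoint
      have hT : T ∉ 𝒞 := fun hT => hTne.ne_empty (disjoint_self.1 (hdisj T hT))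
      refine ⟨insert T 𝒞, R, ?_, ?_, h3, ?_⟩
      · intro C hC
        rcases Finset.mem_insert.1 hC with rfl | hC
        · exact ⟨hTA, hTv, hPT⟩
        · exact ⟨(h1 C hC).1.trans Finset.sdiff_subset, (h1 C hC).2⟩
      · intro C hC C' hC' hne
        rcases Finset.mem_insert.1 hC with h | h <;>
          rcases Finset.mem_insert.1 hC' with h' | h'
        · exact absurd (h.trans h'.symm) hne
        · exact h ▸ (hdisj C' h').symm
        · exact h' ▸ hdisj C h
        · exact h2 C h C' h' hne
      · have := Finset.card_sdiff_add_card_eq_card hTA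
        rw [Finset.card_insert_of_notMem hT, add_mul]
        omega
    · push Not at h
      exact ⟨∅, A, by simp, by simp, h, by simp⟩

/-- Greedy matching: `𝒞'` consists of the unions of matched pairs, `𝒰` of the unmatched clusters,
no two of which have a union satisfying `P`. -/
lemma exists_matching {α : Type*} [DecidableEq α] (P : Finset α → Prop) (m : ℕ) :
    ∀ 𝒞 : Finset (Finset α), 𝒞.card = m → (∀ C ∈ 𝒞, C.Nonempty) →
      (∀ C ∈ 𝒞, ∀ C' ∈ 𝒞, C ≠ C' → Disjoint C C') →
      ∃ 𝒞' 𝒰 : Finset (Finset α),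
        (∀ C ∈ 𝒞', P C ∧ ∃ C₀ ∈ 𝒞, ∃ C₁ ∈ 𝒞, C₀ ≠ C₁ ∧ C = C₀ ∪ C₁) ∧
        (∀ C ∈ 𝒞', ∀ C' ∈ 𝒞', C ≠ C' → Disjoint C C') ∧
        𝒰 ⊆ 𝒞 ∧ (∀ C ∈ 𝒰, ∀ C' ∈ 𝒰, C ≠ C' → ¬ P (C ∪ C')) ∧
        2 * 𝒞'.card + 𝒰.card = 𝒞.card := by
  induction m using Nat.strong_induction_on with
  | _ m ih =>
    intro 𝒞 hm hne hdis
    by_cases h : ∃ B₀ ∈ 𝒞, ∃ B₁ ∈ 𝒞, B₀ ≠ B₁ ∧ P (B₀ ∪ B₁)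
    · obtain ⟨B₀, hB₀, B₁, hB₁, hB, hP⟩ := h
      have hB₁' : B₁ ∈ 𝒞.erase B₀ := Finset.mem_erase.2 ⟨hB.symm, hB₁⟩
      have hcard : ((𝒞.erase B₀).erase B₁).card + 2 = 𝒞.card := by
        have := Finset.card_erase_add_one hB₀
        have := Finset.card_erase_add_one hB₁'
        omega
      have hsub : (𝒞.erase B₀).erase B₁ ⊆ 𝒞 :=
        (Finset.erase_subset _ _).trans (Finset.erase_subset _ _)
      obtain ⟨𝒞', 𝒰, h1, h2, h3, h4, h5⟩ := ih _ (by omega) ((𝒞.erase B₀).erase B₁) rfl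
        (fun C hC => hne C (hsub hC)) (fun C hC C' hC' => hdis C (hsub hC) C' (hsub hC'))
      have hd : ∀ C ∈ (𝒞.erase B₀).erase B₁, Disjoint C (B₀ ∪ B₁) := by
        intro C hC
        have hC' := hC
        simp only [Finset.mem_erase] at hC'
        exact Finset.disjoint_union_right.2
          ⟨hdis C (hsub hC) B₀ hB₀ hC'.2.1, hdis C (hsub hC) B₁ hB₁ hC'.1⟩
      have hd' : ∀ C ∈ 𝒞', Disjoint C (B₀ ∪ B₁) := by
        intro C hC
        obtain ⟨-, C₀, hC₀, C₁, hC₁, -, rfl⟩ := h1 C hC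
        exact Finset.disjoint_union_left.2 ⟨hd C₀ hC₀, hd C₁ hC₁⟩
      have hnot : B₀ ∪ B₁ ∉ 𝒞' := fun hmem =>
        ((hne B₀ hB₀).mono Finset.subset_union_left).ne_empty (disjoint_self.1 (hd' _ hmem))
      refine ⟨insert (B₀ ∪ B₁) 𝒞', 𝒰, ?_, ?_, h3.trans hsub, h4, ?_⟩
      · intro C hC
        rcases Finset.mem_insert.1 hC with rfl | hC
        · exact ⟨hP, B₀, hB₀, B₁, hB₁, hB, rfl⟩
        · obtain ⟨hPC, C₀, hC₀, C₁, hC₁, h⟩ := h1 C hC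
          exact ⟨hPC, C₀, hsub hC₀, C₁, hsub hC₁, h⟩
      · intro C hC C' hC' hCC
        rcases Finset.mem_insert.1 hC with rfl | hC <;>
          rcases Finset.mem_insert.1 hC' with rfl | hC'
        · exact absurd rfl hCC
        · exact (hd' C' hC').symm
        · exact hd' C hC
        · exact h2 C hC C' hC' hCC
      · rw [Finset.card_insert_of_notMem hnot]
        omega
    · push Not at h
      exact ⟨∅, 𝒞, by simp, by simp, Finset.Subset.refl _, h, by simp⟩

/-! ### The ladder of clusters -/

/-- The invariant of level `j`: disjoint clusters with exactly `2^j v` points and diameter at most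
`6^j · 2vr`. -/
structure IsLevel {n : ℕ} (v r j : ℕ) (𝒞 : Finset (Finset (Torus 2 n))) : Prop where
  disjoint : ∀ C ∈ 𝒞, ∀ C' ∈ 𝒞, C ≠ C' → Disjoint C C'
  card : ∀ C ∈ 𝒞, C.card = 2 ^ j * v
  diam : ∀ C ∈ 𝒞, DiamLE (6 ^ j * (2 * v * r)) C

lemma IsLevel.subset {n v r j : ℕ} {𝒞 𝒟 : Finset (Finset (Torus 2 n))} (h : IsLevel v r j 𝒞)
    (hs : 𝒟 ⊆ 𝒞) : IsLevel v r j 𝒟 :=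
  ⟨fun C hC C' hC' => h.disjoint C (hs hC) C' (hs hC'), fun C hC => h.card C (hs hC),
    fun C hC => h.diam C (hs hC)⟩

/-- Unmatched clusters are either at most one, or few because their representatives are at distance
more than `6^j · 8vr`. -/
lemma card_unmatched {n v r j : ℕ} [NeZero n] (hv : 1 ≤ v) {𝒰 : Finset (Finset (Torus 2 n))}
    (h : IsLevel v r j 𝒰)
    (hP : ∀ C ∈ 𝒰, ∀ C' ∈ 𝒰, C ≠ C' → ¬ DiamLE (6 ^ j * (12 * v * r)) (C ∪ C')) :
    𝒰.card ≤ 1 ∨ 𝒰.card * (2 * (6 ^ j * (4 * v * r)) + 1) ^ 2 ≤ n ^ 2 := by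
  classical
  by_cases hcard : 𝒰.card ≤ 1
  · exact Or.inl hcard
  right
  have hne : ∀ C ∈ 𝒰, C.Nonempty := fun C hC => by
    rw [← Finset.card_pos, h.card C hC]
    positivity
  have hrep : ∀ C : Finset (Torus 2 n), ∃ x, C ∈ 𝒰 → x ∈ C := fun C => by
    by_cases hC : C ∈ 𝒰
    · obtain ⟨x, hx⟩ := hne C hC
      exact ⟨x, fun _ => hx⟩
    · exact ⟨0, fun hC' => absurd hC' hC⟩
  choose f hf using hrep
  have hfar : ∀ C ∈ 𝒰, ∀ C' ∈ 𝒰, C ≠ C' →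
      2 * (6 ^ j * (4 * v * r)) < torusDist 2 n (f C) (f C') := by
    intro C hC C' hC' hCC
    by_contra! hle
    refine hP C hC C' hC' hCC ((h.diam C hC).union (h.diam C' hC') (hf C hC) (hf C' hC') ?_)
    have : 2 * (6 ^ j * (4 * v * r)) + 2 * (6 ^ j * (2 * v * r)) = 6 ^ j * (12 * v * r) := by ring
    omega
  have hinj : Set.InjOn f 𝒰 := by
    intro C hC C' hC' hfe
    by_contra hCC
    exact Finset.disjoint_left.1 (h.disjoint C hC C' hC' hCC) (hf C hC) (hfe ▸ hf C' hC')
  obtain ⟨C, hC, C', hC', hCC⟩ := Finset.one_lt_card.1 (not_le.1 hcard)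
  have hn : 2 * (6 ^ j * (4 * v * r)) + 1 ≤ n :=
    (hfar C hC C' hC' hCC).trans_le (torusDist_le_n _ _)
  have := packing (k := 1) hn (𝒰.image f) (by
    intro T hT hTd
    by_contra! hlt
    obtain ⟨x, hx, y, hy, hxy⟩ := Finset.one_lt_card.1 hlt
    obtain ⟨B, hB, rfl⟩ := Finset.mem_image.1 (hT hx)
    obtain ⟨B', hB', rfl⟩ := Finset.mem_image.1 (hT hy)
    have h1 := hfar B hB B' hB' (fun h => hxy (h ▸ rfl))
    have h2 := hTd _ hx _ hy
    omega)
  rwa [Finset.card_image_of_injOn hinj, one_mul] at this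

/-- From a nonempty level `𝒞` at height `j`, a dyadic hierarchy starting with a subfamily of `𝒞`.
The term `2^j v` on the left of the last bound absorbs the loss when one cluster is discarded. -/
lemma exists_ladder {n v r : ℕ} [NeZero n] (hv : 1 ≤ v) (ε : ℕ → ℝ) (hε0 : ∀ j, 0 ≤ ε j)
    (hε : ∀ j N : ℕ, N * (2 * (6 ^ j * (4 * v * r)) + 1) ^ 2 ≤ n ^ 2 →
      (N : ℝ) * (2 ^ j * v) + ε (j + 1) ≤ ε j) (m : ℕ) :
    ∀ (j : ℕ) (𝒞 : Finset (Finset (Torus 2 n))), 𝒞.card = m → 1 ≤ m → IsLevel v r j 𝒞 →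
      ∃ (L : ℕ) (Cs : ℕ → Finset (Finset (Torus 2 n))), j ≤ L ∧ Cs j ⊆ 𝒞 ∧
        (∀ i, j ≤ i → i ≤ L → IsLevel v r i (Cs i)) ∧
        (∀ i, j ≤ i → i < L → ∀ C ∈ Cs (i + 1), DiamLE (6 ^ i * (12 * v * r)) C ∧
          ∃ C₀ ∈ Cs i, ∃ C₁ ∈ Cs i, C₀ ≠ C₁ ∧ C = C₀ ∪ C₁) ∧
        (Cs L).card = 1 ∧
        (m : ℝ) * (2 ^ j * v) + 2 ^ j * v ≤ 2 * (2 ^ L * v) + ε j := by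
  classical
  induction m using Nat.strong_induction_on with
  | _ m ih =>
    intro j 𝒞 hm hm1 hlev
    have hVpos : (0 : ℝ) < 2 ^ j * v := by
      have : (0 : ℝ) < v := by exact_mod_cast hv
      positivity
    -- When few clusters are left, the ladder may end at height `j` with a single cluster.
    have halt : (m : ℝ) * (2 ^ j * v) ≤ 2 ^ j * v + ε j → ∃ (L : ℕ)
        (Cs : ℕ → Finset (Finset (Torus 2 n))), j ≤ L ∧ Cs j ⊆ 𝒞 ∧
        (∀ i, j ≤ i → i ≤ L → IsLevel v r i (Cs i)) ∧
        (∀ i, j ≤ i → i < L → ∀ C ∈ Cs (i + 1), DiamLE (6 ^ i * (12 * v * r)) C ∧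
          ∃ C₀ ∈ Cs i, ∃ C₁ ∈ Cs i, C₀ ≠ C₁ ∧ C = C₀ ∪ C₁) ∧
        (Cs L).card = 1 ∧
        (m : ℝ) * (2 ^ j * v) + 2 ^ j * v ≤ 2 * (2 ^ L * v) + ε j := by
      intro hsmall
      obtain ⟨C, hC⟩ : 𝒞.Nonempty := Finset.card_pos.1 (by omega)
      have hs : ({C} : Finset (Finset (Torus 2 n))) ⊆ 𝒞 := Finset.singleton_subset_iff.2 hC
      refine ⟨j, fun _ => {C}, le_rfl, hs, ?_, ?_, by simp, by linarith⟩
      · intro i h1 h2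
        obtain rfl : i = j := le_antisymm h2 h1
        exact hlev.subset hs
      · intro i h1 h2
        omega
    obtain ⟨𝒞', 𝒰, h1, h2, h3, h4, h5⟩ := exists_matching
      (DiamLE (6 ^ j * (12 * v * r))) m 𝒞 hm
      (fun C hC => by rw [← Finset.card_pos, hlev.card C hC]; positivity) hlev.disjoint
    have hU := card_unmatched hv (hlev.subset h3) h4
    have hεmono : ε (j + 1) ≤ ε j := by
      have := hε j 0 (by simp)
      simpa using this
    have hmR : (m : ℝ) = 2 * 𝒞'.card + 𝒰.card := by
      rw [← hm, ← h5]
      push_cast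
      ring
    have hloss : (𝒰.card : ℝ) * (2 ^ j * v) + ε (j + 1) ≤ 2 ^ j * v + ε j := by
      rcases hU with hU | hU
      · have : (𝒰.card : ℝ) ≤ 1 := by exact_mod_cast hU
        nlinarith
      · have := hε j _ hU
        linarith
    by_cases h0 : 𝒞'.card = 0
    · refine halt ?_
      rw [hmR, h0]
      have := hε0 (j + 1)
      push_cast
      linarith
    have hlev' : IsLevel v r (j + 1) 𝒞' := by
      refine ⟨h2, fun C hC => ?_, fun C hC => ?_⟩
      · obtain ⟨-, C₀, hC₀, C₁, hC₁, hne, rfl⟩ := h1 C hC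
        rw [Finset.card_union_of_disjoint (hlev.disjoint _ hC₀ _ hC₁ hne), hlev.card _ hC₀,
          hlev.card _ hC₁]
        ring
      · have : 6 ^ (j + 1) * (2 * v * r) = 6 ^ j * (12 * v * r) := by ring
        rw [this]
        exact (h1 C hC).1
    obtain ⟨L, Cs, hL, hsub, hCs, hmerge, htop, hbound⟩ :=
      ih 𝒞'.card (by omega) (j + 1) 𝒞' rfl (by omega) hlev'
    refine ⟨L, Function.update Cs j 𝒞, by omega, by simp, ?_, ?_, ?_, ?_⟩
    · intro i hi hiL
      rcases eq_or_lt_of_le hi with rfl | hi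
      · simpa using hlev
      · rw [Function.update_of_ne (by omega)]
        exact hCs i hi hiL
    · intro i hi hiL
      rw [Function.update_of_ne (show i + 1 ≠ j by omega)]
      rcases eq_or_lt_of_le hi with rfl | hi
      · rw [Function.update_self]
        exact fun C hC => h1 C (hsub hC)
      · rw [Function.update_of_ne (by omega)]
        exact hmerge i hi hiL
    · rwa [Function.update_of_ne (by omega)]
    · rw [hmR]
      rw [pow_succ] at hbound
      nlinarith

/-! ### Existence of the hierarchy -/

/-- **Existence of a dormitory hierarchy in dimension 2** (Lemma 3.3).
Let `d = 2`, `μ ∈ (0,1)`, `v ∈ ℕ`, `r = 2⌊√(2v/μ)⌋` and `D_j = 6^j · 12 v r`.  For every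
`n ≥ r + 1` and every `A ⊆ ℤ_n²` with `|A| ≥ μ n²` there is a `(v, D)`-dormitory hierarchy
`(A_j, 𝒞_j)_{j ≤ L}` on `A` with `|A_L| ≥ |A|/4` in which every `C ∈ 𝒞_0` is `r`-connected. -/
theorem stmt12 (μ : ℝ) (hμ : μ ∈ Set.Ioo (0 : ℝ) 1) (v : ℕ) (hv : 1 ≤ v) (n : ℕ)
    (hn : 2 * ⌊Real.sqrt (2 * v / μ)⌋₊ + 1 ≤ n)
    (A : Finset (Torus 2 n)) (hA : μ * (n : ℝ) ^ 2 ≤ (A.card : ℝ)) :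
    ∃ (L : ℕ) (As : ℕ → Finset (Torus 2 n)) (Cs : ℕ → Finset (Finset (Torus 2 n))),
      DormitoryHierarchy 2 n v
        (fun j => 6 ^ j * (12 * v * (2 * ⌊Real.sqrt (2 * v / μ)⌋₊))) A L As Cs ∧
      (A.card : ℝ) / 4 ≤ ((As L).card : ℝ) ∧
      ∀ C ∈ Cs 0, RConnected 2 n (2 * ⌊Real.sqrt (2 * v / μ)⌋₊) C := by
  classical
  obtain ⟨hμ0, hμ1⟩ := hμ
  set s := ⌊Real.sqrt (2 * v / μ)⌋₊ with hs
  have : NeZero n := ⟨by omega⟩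
  have hvR : (1 : ℝ) ≤ v := by exact_mod_cast hv
  have hnR : (0 : ℝ) < n := by exact_mod_cast (by omega : 0 < n)
  have hs1 : 1 ≤ s := by
    rw [hs, Nat.one_le_floor_iff, Real.one_le_sqrt, le_div_iff₀ hμ0]
    linarith
  have hsR : (1 : ℝ) ≤ s := by exact_mod_cast hs1
  have hsv : 2 * v < μ * ((s : ℝ) + 1) ^ 2 := by
    have h1 : Real.sqrt (2 * v / μ) < s + 1 := Nat.lt_floor_add_one _
    have h2 := (Real.sqrt_lt' (by positivity)).1 h1
    rw [div_lt_iff₀ hμ0] at h2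
    linarith
  obtain ⟨𝒞, R, hC, hdis, hR, hcard⟩ := exists_blocks hv (DiamLE (2 * s)) A
  have hRpack : R.card * (2 * s + 1) ^ 2 ≤ v * n ^ 2 := by
    refine packing hn R fun T hT hTd => ?_
    by_contra! hlt
    -- A large set of small diameter contains one with exactly `v` points.
    obtain ⟨T', hT', hc⟩ := Finset.exists_subset_card_eq hlt.le
    exact hR T' (hT'.trans hT) (fun x hx y hy => hTd x (hT' hx) y (hT' hy)) hc
  have hRR : (R.card : ℝ) * (2 * s + 1) ^ 2 ≤ v * n ^ 2 := by exact_mod_cast hRpack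
  have hRsmall : (R.card : ℝ) ≤ 2 / 9 * (μ * n ^ 2) := by
    have h1 : 9 * v ≤ 2 * μ * (2 * (s : ℝ) + 1) ^ 2 := by
      have : 9 * ((s : ℝ) + 1) ^ 2 ≤ 4 * (2 * s + 1) ^ 2 := by nlinarith
      nlinarith
    have h2 : (0 : ℝ) < (2 * s + 1) ^ 2 := by positivity
    refine le_of_mul_le_mul_right ?_ h2
    have h3 : 9 * v * (n : ℝ) ^ 2 ≤ 2 * μ * (2 * (s : ℝ) + 1) ^ 2 * n ^ 2 :=
      mul_le_mul_of_nonneg_right h1 (by positivity)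
    linarith
  have hAR : (𝒞.card : ℝ) * v + R.card = A.card := by exact_mod_cast hcard
  have hApos : 0 < μ * (n : ℝ) ^ 2 := by positivity
  have h𝒞 : 1 ≤ 𝒞.card := by
    by_contra h0
    have h0' : 𝒞.card = 0 := by omega
    rw [h0'] at hAR
    push_cast at hAR
    linarith
  have hlev : IsLevel v (2 * s) 0 𝒞 := by
    refine ⟨hdis, fun C h => by simpa using (hC C h).2.1, fun C h x hx y hy => ?_⟩
    have h1 := (hC C h).2.2 x hx y hy
    have h2 : 2 * s ≤ 6 ^ 0 * (2 * v * (2 * s)) := by nlinarith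
    exact h1.trans h2
  have hε : ∀ j N : ℕ, N * (2 * (6 ^ j * (4 * v * (2 * s))) + 1) ^ 2 ≤ n ^ 2 →
      (N : ℝ) * (2 ^ j * v) + μ * (n : ℝ) ^ 2 / 64 * (1 / 2) ^ (j + 1)
        ≤ μ * (n : ℝ) ^ 2 / 64 * (1 / 2) ^ j := by
    intro j N hN
    have hN' : (N : ℝ) * (2 * (6 ^ j * (4 * v * (2 * s))) + 1) ^ 2 ≤ n ^ 2 := by
      exact_mod_cast hN
    -- With `4s² ≥ (s+1)² ≥ 2v/μ` and `36 ≥ 4`, the side of the square beats the cluster size.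
    have h4 : 128 * ((4 : ℝ) ^ j * v) ≤ μ * (2 * (6 ^ j * (4 * v * (2 * s))) + 1) ^ 2 := by
      have e1 : (4 : ℝ) ^ j ≤ (6 ^ j) ^ 2 := by
        rw [← pow_mul, mul_comm j 2, pow_mul]
        gcongr
        norm_num
      have e2 : 2 * (v : ℝ) ≤ μ * (4 * s ^ 2) := by nlinarith
      have e3 : ((2 * (6 ^ j * (4 * v * (2 * s))) : ℝ)) ^ 2
          ≤ (2 * (6 ^ j * (4 * v * (2 * s))) + 1) ^ 2 := by
        gcongr
        linarith
      calc 128 * ((4 : ℝ) ^ j * v) = 4 ^ j * (64 * 1 * (2 * v)) := by ring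
        _ ≤ (6 ^ j) ^ 2 * (64 * (v : ℝ) ^ 2 * (μ * (4 * s ^ 2))) := by
          gcongr
          exact one_le_pow₀ hvR
        _ = μ * (2 * (6 ^ j * (4 * v * (2 * s)))) ^ 2 := by ring
        _ ≤ _ := by gcongr
    have h5 : (N : ℝ) * (128 * (4 ^ j * v)) ≤ μ * n ^ 2 :=
      calc (N : ℝ) * (128 * (4 ^ j * v))
          ≤ N * (μ * (2 * (6 ^ j * (4 * v * (2 * s))) + 1) ^ 2) := by gcongr
        _ = μ * (N * (2 * (6 ^ j * (4 * v * (2 * s))) + 1) ^ 2) := by ring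
        _ ≤ μ * n ^ 2 := by gcongr
    have h6 : ((4 : ℝ)) ^ j * (1 / 2) ^ j = 2 ^ j := by
      rw [← mul_pow]
      norm_num
    have h7 := mul_le_mul_of_nonneg_right h5 (by positivity : (0 : ℝ) ≤ (1 / 2) ^ j)
    have h8 : (N : ℝ) * (128 * (4 ^ j * v)) * (1 / 2) ^ j = 128 * (N * (2 ^ j * v)) := by
      rw [← h6]
      ring
    rw [pow_succ (1 / 2 : ℝ) j]
    linarith
  obtain ⟨L, Cs, -, hsub, hlevs, hmerge, htop, hbound⟩ := exists_ladder hv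
    (fun j => μ * (n : ℝ) ^ 2 / 64 * (1 / 2) ^ j) (fun j => by positivity) hε _ 0 𝒞 rfl h𝒞 hlev
  refine ⟨L, fun j => (Cs j).biUnion id, Cs, ?_, ?_, ?_⟩
  · refine ⟨?_, ?_, ?_, ?_, ?_, ?_, ?_, htop⟩
    · exact Finset.biUnion_subset.2 fun C h => (hC C (hsub h)).1
    · intro j hj
      refine Finset.biUnion_subset.2 fun C h => ?_
      obtain ⟨-, C₀, h₀, C₁, h₁, -, rfl⟩ := hmerge j (Nat.zero_le _) hj C h
      exact Finset.union_subset (Finset.subset_biUnion_of_mem id h₀)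
        (Finset.subset_biUnion_of_mem id h₁)
    · intro j hj C h
      rw [← Finset.card_pos, (hlevs j (Nat.zero_le _) hj).card C h]
      positivity
    · intro j hj
      exact (hlevs j (Nat.zero_le _) hj).disjoint
    · intro j _ x
      simp
    · intro j hj C h
      rw [(hlevs j (Nat.zero_le _) hj).card C h]
      exact Nat.mul_le_mul_right _ (Nat.pow_le_pow_right (by norm_num) (Nat.div_le_self _ _))
    · intro j hj C h _
      exact hmerge j (Nat.zero_le _) hj C h
  · obtain ⟨C, hCL⟩ := Finset.card_eq_one.1 htop
    have hc : C.card = 2 ^ L * v := (hlevs L (Nat.zero_le _) le_rfl).card C (by simp [hCL])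
    have hfin : (((Cs L).biUnion id).card : ℝ) = 2 ^ L * v := by
      rw [hCL, Finset.singleton_biUnion, id, hc]
      push_cast
      ring
    rw [hfin]
    norm_num at hbound
    linarith
  · exact fun C h => (hC C (hsub h)).2.2.rConnected
end
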